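/- Let {G, (Γ0, Γ1), (Γ̃0, Γ̃1)} be a generalized boundary triple for the adjoint pair {S, S̃} with core {T, T̃} of {S*, S̃*}. Then dom S = ker Γ̃0 ∩ ker Γ̃1 and dom S̃ = ker Γ0 ∩ ker Γ1. -/

import Mathlib

open scoped ComplexInnerProductSpace

noncomputable section

/-- The inner product in the convention of the paper: linear in the *first* argument and
conjugate-linear in the second (the opposite of Mathlib's convention). -/
def pinner {E : Type*} [NormedAddCommGroup E] [InnerProductSpace ℂ E] (x y : E) : ℂ :=
  ⟪y, x⟫

variable {H G : Type*}
  [NormedAddCommGroup H] [InnerProductSpace ℂ H] [CompleteSpace H]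
  [NormedAddCommGroup G] [InnerProductSpace ℂ G] [CompleteSpace G]

/-- The restriction of a partially defined linear operator `T` in `H` to a submodule `p` of its
domain, viewed again as a partially defined linear operator in `H`. -/
def LinearPMap.restrictTo (T : H →ₗ.[ℂ] H) (p : Submodule ℂ T.domain) : H →ₗ.[ℂ] H where
  domain := p.map T.domain.subtype
  toFun := T.toFun ∘ₗ p.subtype ∘ₗ
    (Submodule.equivMapOfInjective T.domain.subtype (Submodule.injective_subtype _)
      p).symm.toLinearMap

/-- `R` is the (everywhere defined, bounded) resolvent of the operator `A` at the point `lam`,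
i.e. `R` is a two-sided inverse of `A - lam`. -/
def ResolventAt (A : H →ₗ.[ℂ] H) (lam : ℂ) (R : H →L[ℂ] H) : Prop :=
  (∀ x : A.domain, R (A x - lam • (x : H)) = (x : H)) ∧
  (∀ h : H, ∃ x : A.domain, (x : H) = R h ∧ A x - lam • (x : H) = h)

/-- `lam` belongs to the resolvent set of `A`: `A - lam` is a bijection of `dom A` onto `H`
with a bounded everywhere defined inverse. -/
def InResolventSet (A : H →ₗ.[ℂ] H) (lam : ℂ) : Prop :=
  ∃ R : H →L[ℂ] H, ResolventAt A lam R

/-- `{G, (Γ0, Γ1), (Γt0, Γt1)}` is a generalized boundary triple for the adjoint pair `{S, St}`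
with core `{T, Tt}` of `{S*, St*}`. -/
structure IsGeneralizedBoundaryTriple (S St T Tt : H →ₗ.[ℂ] H)
    (Γ0 Γ1 : T.domain →ₗ[ℂ] G) (Γt0 Γt1 : Tt.domain →ₗ[ℂ] G) : Prop where
  dense_S : Dense (S.domain : Set H)
  dense_St : Dense (St.domain : Set H)
  closed_S : S.IsClosed
  closed_St : St.IsClosed
  adjoint_pair : ∀ (f : S.domain) (g : St.domain),
    pinner (S f) (g : H) = pinner (f : H) (St g)
  T_le : T ≤ S.adjoint
  Tt_le : Tt ≤ St.adjoint
  T_adjoint : T.adjoint = S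
  Tt_adjoint : Tt.adjoint = St
  green : ∀ (f : T.domain) (g : Tt.domain),
    pinner (T f) (g : H) - pinner (f : H) (Tt g)
      = pinner (Γ1 f) (Γt0 g) - pinner (Γ0 f) (Γt1 g)
  surj_Γ0 : Function.Surjective Γ0
  surj_Γt0 : Function.Surjective Γt0
  A0_adjoint : (T.restrictTo (LinearMap.ker Γ0)).adjoint = Tt.restrictTo (LinearMap.ker Γt0)
  At0_adjoint : (Tt.restrictTo (LinearMap.ker Γt0)).adjoint = T.restrictTo (LinearMap.ker Γ0)

/-!
Write `A0 = T↾ker Γ0` and `Ã0 = T̃↾ker Γ̃0`. Since `A0 ⊆ T`, taking adjoints gives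
`T* ⊆ A0* = Ã0 ⊆ T̃`, so every `f ∈ dom T*` lies in `dom T̃` and satisfies `Γ̃0 f = 0` and
`T̃ f = T* f`. The Green identity for such `f` reduces to `(Γ0 h, Γ̃1 f) = 0` for all `h ∈ dom T`,
hence `Γ̃1 f = 0` because the range of `Γ0` is dense. Conversely, if both boundary values of
`f ∈ dom T̃` vanish, the Green identity reads `(T h, f) = (h, T̃ f)`, so `f ∈ dom T*`. The Green
identity is symmetric under exchanging the two operators, which gives the other equality.
-/

section KerRestriction

variable {R V W X : Type*} [Ring R] [AddCommGroup V] [Module R V] [AddCommGroup W] [Module R W]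
  [AddCommGroup X] [Module R X]

/-- The restriction `T↾ker Γ` of a partially defined operator `T` to the kernel of a boundary map
`Γ` on `dom T`. For `Γ = Γ0` it is the operator `A0` of a boundary triple. -/
def kerRestriction (T : V →ₗ.[R] W) (Γ : T.domain →ₗ[R] X) : V →ₗ.[R] W :=
  T.domRestrict ((LinearMap.ker Γ).map T.domain.subtype)

theorem kerRestriction_le (T : V →ₗ.[R] W) (Γ : T.domain →ₗ[R] X) : kerRestriction T Γ ≤ T :=
  LinearPMap.domRestrict_le

end KerRestriction

section Hilbert

open scoped InnerProductSpace LinearPMap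

variable {𝕜 E F G₀ G₁ : Type*} [RCLike 𝕜]
  [NormedAddCommGroup E] [InnerProductSpace 𝕜 E]
  [NormedAddCommGroup F] [InnerProductSpace 𝕜 F]
  [NormedAddCommGroup G₀] [InnerProductSpace 𝕜 G₀]
  [NormedAddCommGroup G₁] [InnerProductSpace 𝕜 G₁]

theorem adjoint_le_adjoint_of_le [CompleteSpace E] {A T : E →ₗ.[𝕜] F} (hAT : A ≤ T)
    (hA : Dense (A.domain : Set E)) : T† ≤ A† := by
  have hT : Dense (T.domain : Set E) := hA.mono hAT.1
  refine LinearPMap.IsFormalAdjoint.le_adjoint hA fun x y ↦ ?_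
  have hx : A x = T ⟨x, hAT.1 x.2⟩ := hAT.2 rfl
  rw [hx]
  exact (LinearPMap.adjoint_isFormalAdjoint hT).symm ⟨x, hAT.1 x.2⟩ y

-- Mathlib's adjoint of an operator whose domain is not dense is the zero map on its domain, and
-- the adjoint of that zero map is everywhere defined.
theorem dense_domain_of_adjoint_adjoint_eq [CompleteSpace E] [CompleteSpace F]
    {A : E →ₗ.[𝕜] F} (h : A†† = A) : Dense (A.domain : Set E) := by
  by_contra hA
  have htop : A.domain = ⊤ := by
    rw [← h, Submodule.eq_top_iff']
    exact fun x ↦ LinearPMap.mem_adjoint_domain_of_exists x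
      ⟨0, fun y ↦ by simp only [LinearPMap.adjoint_apply_of_not_dense hA y, inner_zero_left,
        inner_zero_right]⟩
  exact hA (by simp [htop])

/-- The abstract Green identity for a pair of operators `T`, `Tt` between possibly different spaces
with boundary maps `Γ0`, `Γ1` on `dom T` and `Γt0`, `Γt1` on `dom Tt`. The values of `Γ0`, `Γt1` are
paired in `G₀`, those of `Γ1`, `Γt0` in `G₁`. Inner products are conjugate-linear in the first
argument, so their arguments are swapped in comparison with the paper. -/
def GreenIdentity (T : E →ₗ.[𝕜] F) (Tt : F →ₗ.[𝕜] E)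
    (Γ0 : T.domain →ₗ[𝕜] G₀) (Γ1 : T.domain →ₗ[𝕜] G₁)
    (Γt0 : Tt.domain →ₗ[𝕜] G₁) (Γt1 : Tt.domain →ₗ[𝕜] G₀) : Prop :=
  ∀ (f : T.domain) (g : Tt.domain),
    ⟪(g : F), T f⟫_𝕜 - ⟪Tt g, (f : E)⟫_𝕜 = ⟪Γt0 g, Γ1 f⟫_𝕜 - ⟪Γt1 g, Γ0 f⟫_𝕜

namespace GreenIdentity

variable {T : E →ₗ.[𝕜] F} {Tt : F →ₗ.[𝕜] E}
  {Γ0 : T.domain →ₗ[𝕜] G₀} {Γ1 : T.domain →ₗ[𝕜] G₁}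
  {Γt0 : Tt.domain →ₗ[𝕜] G₁} {Γt1 : Tt.domain →ₗ[𝕜] G₀}

theorem symm (green : GreenIdentity T Tt Γ0 Γ1 Γt0 Γt1) :
    GreenIdentity Tt T Γt0 Γt1 Γ0 Γ1 := fun g f ↦ by
  have hconj := congrArg (starRingEnd 𝕜) (green f g)
  simp only [map_sub, inner_conj_symm] at hconj
  linear_combination -hconj

theorem mem_adjoint_domain [CompleteSpace E] (green : GreenIdentity T Tt Γ0 Γ1 Γt0 Γt1)
    {g : Tt.domain} (hg0 : Γt0 g = 0) (hg1 : Γt1 g = 0) : (g : F) ∈ T†.domain := by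
  refine LinearPMap.mem_adjoint_domain_of_exists _ ⟨Tt g, fun f ↦ ?_⟩
  have hgreen := green f g
  simp only [hg0, hg1, inner_zero_left, sub_self] at hgreen
  exact (sub_eq_zero.mp hgreen).symm

theorem Γt1_eq_zero (green : GreenIdentity T Tt Γ0 Γ1 Γt0 Γt1) (hΓ0 : DenseRange Γ0)
    {g : Tt.domain} (hg0 : Γt0 g = 0) (hg : ∀ f : T.domain, ⟪Tt g, (f : E)⟫_𝕜 = ⟪(g : F), T f⟫_𝕜) :
    Γt1 g = 0 := by
  refine hΓ0.eq_zero_of_inner_left 𝕜 fun f ↦ ?_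
  have hgreen := green f g
  rwa [hg f, hg0, inner_zero_left, sub_self, zero_sub, zero_eq_neg] at hgreen

theorem adjoint_domain_eq [CompleteSpace E] (green : GreenIdentity T Tt Γ0 Γ1 Γt0 Γt1)
    (hΓ0 : DenseRange Γ0) (hT : Dense (T.domain : Set E)) (hle : T† ≤ kerRestriction Tt Γt0) :
    T†.domain = (LinearMap.ker Γt0 ⊓ LinearMap.ker Γt1).map Tt.domain.subtype := by
  apply le_antisymm
  · intro y hy
    obtain ⟨g, hg0, rfl⟩ : y ∈ (LinearMap.ker Γt0).map Tt.domain.subtype := (hle.1 hy).1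
    have hTt : T† ⟨g, hy⟩ = Tt g := (hle.trans (kerRestriction_le Tt Γt0)).2 rfl
    have hg1 : Γt1 g = 0 := green.Γt1_eq_zero hΓ0 hg0 fun f ↦
      hTt ▸ LinearPMap.adjoint_isFormalAdjoint hT ⟨g, hy⟩ f
    exact ⟨g, ⟨hg0, hg1⟩, rfl⟩
  · rintro _ ⟨g, ⟨hg0, hg1⟩, rfl⟩
    exact green.mem_adjoint_domain hg0 hg1

theorem adjoint_domain_eq_of_kerRestriction_adjoint [CompleteSpace E] [CompleteSpace F]
    (green : GreenIdentity T Tt Γ0 Γ1 Γt0 Γt1) (hΓ0 : DenseRange Γ0)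
    (hA0 : (kerRestriction T Γ0)† = kerRestriction Tt Γt0)
    (hAt0 : (kerRestriction Tt Γt0)† = kerRestriction T Γ0) :
    T†.domain = (LinearMap.ker Γt0 ⊓ LinearMap.ker Γt1).map Tt.domain.subtype := by
  have hdense : Dense ((kerRestriction T Γ0).domain : Set E) :=
    dense_domain_of_adjoint_adjoint_eq (by rw [hA0, hAt0])
  have hA0T : kerRestriction T Γ0 ≤ T := kerRestriction_le T Γ0
  exact green.adjoint_domain_eq hΓ0 (hdense.mono hA0T.1)
    (hA0 ▸ adjoint_le_adjoint_of_le hA0T hdense)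

end GreenIdentity

theorem stmt1_general [CompleteSpace E] [CompleteSpace F]
    (T : E →ₗ.[𝕜] F) (Tt : F →ₗ.[𝕜] E)
    (Γ0 : T.domain →ₗ[𝕜] G₀) (Γ1 : T.domain →ₗ[𝕜] G₁)
    (Γt0 : Tt.domain →ₗ[𝕜] G₁) (Γt1 : Tt.domain →ₗ[𝕜] G₀)
    (green : GreenIdentity T Tt Γ0 Γ1 Γt0 Γt1)
    (hΓ0 : DenseRange Γ0) (hΓt0 : DenseRange Γt0)
    (hA0 : (kerRestriction T Γ0)† = kerRestriction Tt Γt0)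
    (hAt0 : (kerRestriction Tt Γt0)† = kerRestriction T Γ0) :
    T†.domain = (LinearMap.ker Γt0 ⊓ LinearMap.ker Γt1).map Tt.domain.subtype ∧
    Tt†.domain = (LinearMap.ker Γ0 ⊓ LinearMap.ker Γ1).map T.domain.subtype :=
  ⟨green.adjoint_domain_eq_of_kerRestriction_adjoint hΓ0 hA0 hAt0,
    green.symm.adjoint_domain_eq_of_kerRestriction_adjoint hΓt0 hAt0 hA0⟩

end Hilbert

theorem restrictTo_eq_domRestrict {K : Type*} [NormedAddCommGroup K] [InnerProductSpace ℂ K]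
    (T : K →ₗ.[ℂ] K) (p : Submodule ℂ T.domain) :
    T.restrictTo p = T.domRestrict (p.map T.domain.subtype) := by
  have hdom : p.map T.domain.subtype = p.map T.domain.subtype ⊓ T.domain :=
    (inf_eq_left.mpr (Submodule.map_subtype_le T.domain p)).symm
  refine LinearPMap.dExt hdom fun x y hxy ↦ ?_
  let e := Submodule.equivMapOfInjective T.domain.subtype (Submodule.injective_subtype _) p
  have hx : ((e.symm x : T.domain) : K) = x := congrArg Subtype.val (e.apply_symm_apply x)
  exact (LinearPMap.domRestrict_apply (hxy.symm.trans hx.symm)).symm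

theorem stmt1
    (S St T Tt : H →ₗ.[ℂ] H)
    (Γ0 Γ1 : T.domain →ₗ[ℂ] G) (Γt0 Γt1 : Tt.domain →ₗ[ℂ] G)
    (hgbt : IsGeneralizedBoundaryTriple S St T Tt Γ0 Γ1 Γt0 Γt1)
    :
    S.domain = (LinearMap.ker Γt0 ⊓ LinearMap.ker Γt1).map Tt.domain.subtype ∧
    St.domain = (LinearMap.ker Γ0 ⊓ LinearMap.ker Γ1).map T.domain.subtype := by
  rw [← hgbt.T_adjoint, ← hgbt.Tt_adjoint]
  exact stmt1_general T Tt Γ0 Γ1 Γt0 Γt1 hgbt.green hgbt.surj_Γ0.denseRange hgbt.surj_Γt0.denseRange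
    (by simpa only [restrictTo_eq_domRestrict, kerRestriction] using hgbt.A0_adjoint)
    (by simpa only [restrictTo_eq_domRestrict, kerRestriction] using hgbt.At0_adjoint)

end
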